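/- Let V be a finite nonempty set and let E be a collection of finite subsets of V that is downward closed (if e ∈ E and e' ⊆ e then e' ∈ E) and contains every singleton {v}, v ∈ V (a joint measurability hypergraph). Then there exist d ≥ 1 and, for each v ∈ V, a binary POVM F_v on ℂ^d (a pair of positive semidefinite d×d complex matrices summing to the identity) such that for every nonempty subset S ⊆ V, the family {F_v : v ∈ S} is jointly measurable if and only if S ∈ E. That is, every joint measurability hypergraph admits a quantum realization with POVMs. -/

import Mathlib

open scoped BigOperators ComplexOrder

namespace JMHyper

/-- Joint measurability of the subfamily indexed by `S`, over a general index type. -/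
def JM {V : Type*} [DecidableEq V] {n : Type*} [Fintype n] [DecidableEq n]
    (F : V → Bool → Matrix n n ℂ) (S : Finset V) : Prop :=
  ∃ J : (S → Bool) → Matrix n n ℂ,
    (∀ f, (J f).PosSemidef) ∧ (∑ f, J f = 1) ∧
      ∀ (v : S) (b : Bool),
        ∑ f ∈ Finset.univ.filter (fun f => f v = b), J f = F v.1 b

/-- Sign of an outcome. -/
def sg (b : Bool) : ℝ := if b then 1 else -1

lemma sg_sq (b : Bool) : sg b ^ 2 = 1 := by cases b <;> simp [sg]

lemma sg_not (b : Bool) : sg (!b) = - sg b := by cases b <;> simp [sg]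

lemma ind_eq (b c : Bool) : (if b = c then (1 : ℝ) else 0) = (1 + sg c * sg b) / 2 := by
  cases b <;> cases c <;> norm_num [sg]

lemma submatrix_sum' {ι m n : Type*} (s : Finset ι) (A : ι → Matrix n n ℂ) (e : m → n) :
    (∑ i ∈ s, A i).submatrix e e = ∑ i ∈ s, (A i).submatrix e e := by
  ext i j
  simp [Matrix.sum_apply]

lemma JM.submatrix {V : Type*} [DecidableEq V] {n m : Type*} [Fintype n] [DecidableEq n]
    [Fintype m] [DecidableEq m] {F : V → Bool → Matrix n n ℂ} {S : Finset V}
    (h : JM F S) (e : m → n) (he : Function.Injective e) :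
    JM (fun v b => (F v b).submatrix e e) S := by
  obtain ⟨J, h1, h2, h3⟩ := h
  refine ⟨fun f => (J f).submatrix e e, fun f => (h1 f).submatrix e, ?_, ?_⟩
  · rw [← submatrix_sum', h2, Matrix.submatrix_one e he]
  · intro v b
    rw [← submatrix_sum', h3]

lemma posSemidef_blockDiagonal {n o : Type*} [Fintype n] [DecidableEq n] [Fintype o]
    [DecidableEq o] (A : o → Matrix n n ℂ) (h : ∀ k, (A k).PosSemidef) :
    (Matrix.blockDiagonal A).PosSemidef := by
  have h' : ∀ k, ∃ B : Matrix n n ℂ, A k = B.conjTranspose * B := by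
    intro k
    open scoped MatrixOrder Matrix.Norms.L2Operator in
    obtain ⟨B, hB⟩ := CStarAlgebra.nonneg_iff_eq_star_mul_self.mp (h k).nonneg
    exact ⟨B, hB⟩
  choose B hB using h'
  have : A = fun k => (B k).conjTranspose * B k := funext hB
  rw [this, Matrix.blockDiagonal_mul, ← Matrix.blockDiagonal_conjTranspose]
  exact Matrix.posSemidef_conjTranspose_mul_self _

lemma blockDiagonal_sum' {ι n o : Type*} [DecidableEq o] (s : Finset ι)
    (A : ι → o → Matrix n n ℂ) :
    ∑ i ∈ s, Matrix.blockDiagonal (A i) = Matrix.blockDiagonal (fun k => ∑ i ∈ s, A i k) := by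
  ext ⟨i, k⟩ ⟨j, l⟩
  simp only [Matrix.sum_apply, Matrix.blockDiagonal_apply]
  split_ifs <;> simp

lemma JM.block {V : Type*} [DecidableEq V] {n o : Type*} [Fintype n] [DecidableEq n]
    [Fintype o] [DecidableEq o] {F : o → V → Bool → Matrix n n ℂ} {S : Finset V}
    (h : ∀ k, JM (F k) S) :
    JM (fun v b => Matrix.blockDiagonal (fun k => F k v b)) S := by
  choose J h1 h2 h3 using h
  refine ⟨fun f => Matrix.blockDiagonal (fun k => J k f),
    fun f => posSemidef_blockDiagonal _ fun k => h1 k f, ?_, ?_⟩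
  · rw [blockDiagonal_sum']
    simp only [h2]
    exact Matrix.blockDiagonal_one
  · intro v b
    rw [blockDiagonal_sum']
    simp only [h3]

/-- Hermitian Clifford generators. -/
def Cliff {V n : Type*} [DecidableEq V] [Fintype n] [DecidableEq n] (G : V → Matrix n n ℂ) :
    Prop :=
  (∀ v, (G v).IsHermitian) ∧ (∀ v, G v * G v = 1) ∧ ∀ v w, v ≠ w → G v * G w + G w * G v = 0

lemma exists_cliff_fin (k : ℕ) : ∃ (n : Type) (_ : Fintype n) (_ : DecidableEq n) (_ : Nonempty n)
    (G : Fin k → Matrix n n ℂ), Cliff G := by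
  induction k with
  | zero =>
    exact ⟨Unit, inferInstance, inferInstance, inferInstance, fun _ => 1,
      fun v => v.elim0, fun v => v.elim0, fun v => v.elim0⟩
  | succ k ih =>
    obtain ⟨n, _, _, _, G, h1, h2, h3⟩ := ih
    refine ⟨n ⊕ n, inferInstance, inferInstance, inferInstance,
      Fin.cons (Matrix.fromBlocks 1 0 0 (-1)) (fun i => Matrix.fromBlocks 0 (G i) (G i) 0),
      ?_, ?_, ?_⟩
    · intro v
      refine Fin.cases ?_ (fun i => ?_) v
      · simp [Matrix.IsHermitian, Matrix.fromBlocks_conjTranspose]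
      · simp [Matrix.IsHermitian, Matrix.fromBlocks_conjTranspose, (h1 i).eq]
    · intro v
      refine Fin.cases ?_ (fun i => ?_) v
      · simp [Matrix.fromBlocks_multiply]
      · simp [Matrix.fromBlocks_multiply, h2]
    · intro v w
      refine Fin.cases ?_ (fun i => ?_) v <;> refine Fin.cases ?_ (fun j => ?_) w
      · simp
      · simp [Matrix.fromBlocks_multiply, Matrix.fromBlocks_add]
      · simp [Matrix.fromBlocks_multiply, Matrix.fromBlocks_add]
      · intro hij
        have := h3 i j (fun h => hij (by rw [h]))
        simp [Matrix.fromBlocks_multiply, Matrix.fromBlocks_add, this]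

lemma exists_cliff (V : Type*) [Fintype V] [DecidableEq V] :
    ∃ (n : Type) (_ : Fintype n) (_ : DecidableEq n) (_ : Nonempty n)
    (G : V → Matrix n n ℂ), Cliff G := by
  obtain ⟨n, i1, i2, i3, G, h1, h2, h3⟩ := exists_cliff_fin (Fintype.card V)
  refine ⟨n, i1, i2, i3, fun v => G (Fintype.equivFin V v), fun v => h1 _, fun v => h2 _,
    fun v w h => h3 _ _ ?_⟩
  simpa using h

section
variable {V n : Type*} [DecidableEq V] [Fintype n] [DecidableEq n] {G : V → Matrix n n ℂ}

lemma Cliff.sum_herm (hG : Cliff G) {ι : Type*} (s : Finset ι) (p : ι → V) (c : ι → ℝ) :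
    (∑ i ∈ s, c i • G (p i)).IsHermitian := by
  unfold Matrix.IsHermitian
  rw [Matrix.conjTranspose_sum]
  refine Finset.sum_congr rfl fun i _ => ?_
  rw [Matrix.conjTranspose_smul, (hG.1 _).eq]
  simp

lemma Cliff.sum_sq (hG : Cliff G) {ι : Type*} (s : Finset ι) (p : ι → V)
    (hp : Function.Injective p) (c : ι → ℝ) :
    (∑ i ∈ s, c i • G (p i)) * (∑ i ∈ s, c i • G (p i))
      = (∑ i ∈ s, c i ^ 2) • (1 : Matrix n n ℂ) := by
  classical
  have e1 : (∑ i ∈ s, c i • G (p i)) * (∑ i ∈ s, c i • G (p i))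
      = ∑ i ∈ s, ∑ j ∈ s, (c i * c j) • (G (p i) * G (p j)) := by
    rw [Finset.sum_mul_sum]
    refine Finset.sum_congr rfl fun i _ => Finset.sum_congr rfl fun j _ => ?_
    rw [smul_mul_smul_comm]
  have e2 : (∑ i ∈ s, c i • G (p i)) * (∑ i ∈ s, c i • G (p i))
      = ∑ i ∈ s, ∑ j ∈ s, (c i * c j) • (G (p j) * G (p i)) := by
    rw [e1, Finset.sum_comm]
    refine Finset.sum_congr rfl fun i _ => Finset.sum_congr rfl fun j _ => ?_
    rw [mul_comm]
  have e3 : (2 : ℝ) • ((∑ i ∈ s, c i • G (p i)) * (∑ i ∈ s, c i • G (p i)))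
      = (2 : ℝ) • ((∑ i ∈ s, c i ^ 2) • (1 : Matrix n n ℂ)) := by
    rw [two_smul]
    nth_rewrite 1 [e1]
    rw [e2, ← Finset.sum_add_distrib, Finset.sum_smul, Finset.smul_sum]
    refine Finset.sum_congr rfl fun i hi => ?_
    rw [← Finset.sum_add_distrib, Finset.sum_eq_single i]
    · rw [hG.2.1, two_smul, sq]
    · intro j _ hj
      rw [← smul_add, hG.2.2 _ _ (fun h => hj (hp h).symm), smul_zero]
    · exact fun h => absurd hi h
  exact smul_right_injective _ (two_ne_zero) e3

lemma psd_smul {A : Matrix n n ℂ} (hA : A.PosSemidef) {c : ℝ} (hc : 0 ≤ c) :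
    (c • A).PosSemidef := hA.smul hc

lemma psd_one_add {B : Matrix n n ℂ} (hB : B.IsHermitian) {c : ℝ} (hc : c ≤ 1)
    (hBB : B * B = c • (1 : Matrix n n ℂ)) : (1 + B).PosSemidef := by
  have hh : (1 + B).IsHermitian := Matrix.isHermitian_one.add hB
  have h1 : ((1 + B) * (1 + B)).PosSemidef := by
    have := Matrix.posSemidef_conjTranspose_mul_self (1 + B)
    rwa [hh.eq] at this
  have h2 : ((1 - c) • (1 : Matrix n n ℂ)).PosSemidef :=
    psd_smul Matrix.PosSemidef.one (by linarith)
  have h3 := psd_smul (h1.add h2) (c := 1 / 2) (by norm_num)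
  have : (1 + B) = (1 / 2 : ℝ) • ((1 + B) * (1 + B) + (1 - c) • (1 : Matrix n n ℂ)) := by
    rw [add_mul, mul_add, mul_add, hBB]
    simp only [one_mul, mul_one]
    module
  rw [this]
  exact h3

lemma trace_bound {A J : Matrix n n ℂ} (hA : A.IsHermitian) (hJ : J.PosSemidef) {r : ℝ}
    (hr : 0 < r) (hAA : A * A = (r ^ 2) • (1 : Matrix n n ℂ)) :
    (A * J).trace.re ≤ r * J.trace.re := by
  set C := r • (1 : Matrix n n ℂ) - A with hC
  have hCh : C.conjTranspose = C := by
    rw [hC, Matrix.conjTranspose_sub, Matrix.conjTranspose_smul, hA.eq]; simp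
  have hCC : C * C = (2 * r) • C := by
    rw [hC, sub_mul, mul_sub, mul_sub, hAA]
    simp only [smul_mul_assoc, mul_smul_comm, one_mul, mul_one]
    module
  have h1 : (C * J * C).PosSemidef := by
    have := hJ.mul_mul_conjTranspose_same C
    rwa [hCh] at this
  have h2 := h1.trace_nonneg
  rw [Matrix.trace_mul_comm, ← mul_assoc, hCC, smul_mul_assoc, Matrix.trace_smul] at h2
  have h3 := (Complex.le_def.1 h2).1
  simp only [Complex.zero_re, Complex.smul_re, smul_eq_mul] at h3
  have h4 : 0 ≤ (C * J).trace.re := by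
    by_contra h
    push Not at h
    have := mul_neg_of_pos_of_neg (show 0 < 2 * r by linarith) h
    linarith
  rw [hC, sub_mul, Matrix.trace_sub, smul_mul_assoc, one_mul, Matrix.trace_smul] at h4
  simp only [Complex.sub_re, Complex.smul_re, smul_eq_mul] at h4
  linarith

/-- Noisy Clifford observables. -/
noncomputable def noisy (G : V → Matrix n n ℂ) (a : V → ℝ) (v : V) (b : Bool) : Matrix n n ℂ :=
  (1 / 2 : ℝ) • (1 + (sg b * a v) • G v)

lemma noisy_add (a : V → ℝ) (v : V) : noisy G a v false + noisy G a v true = 1 := by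
  simp only [noisy, sg]
  simp only [Bool.false_eq_true, if_false, if_true]
  module

lemma sum_flip {ι : Type*} [Fintype ι] [DecidableEq ι] (v : ι) (g : (ι → Bool) → ℝ)
    (h : ∀ f, g (Function.update f v (!(f v))) = - g f) : ∑ f, g f = 0 := by
  have hinv : Function.Involutive (fun f : ι → Bool => Function.update f v (!(f v))) := by
    intro f
    simp
  have := Equiv.sum_comp hinv.toPerm g
  simp only [Function.Involutive.coe_toPerm, h, Finset.sum_neg_distrib] at this
  linarith

lemma sum_sg {ι : Type*} [Fintype ι] [DecidableEq ι] (v : ι) :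
    ∑ f : ι → Bool, sg (f v) = 0 :=
  sum_flip v _ fun f => by simp [sg_not]

lemma sum_sg_sg {ι : Type*} [Fintype ι] [DecidableEq ι] (v w : ι) :
    ∑ f : ι → Bool, sg (f v) * sg (f w) = if v = w then 2 ^ Fintype.card ι else 0 := by
  split_ifs with h
  · subst h
    simp [← sq, sg_sq]
  · exact sum_flip v _ fun f => by simp [sg_not, Function.update_of_ne (Ne.symm h)]

lemma jm_noisy (hG : Cliff G) (a : V → ℝ) (S : Finset V) (h : ∑ v ∈ S, a v ^ 2 ≤ 1) :
    JM (noisy G a) S := by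
  set N : ℝ := 2 ^ Fintype.card S with hN
  have hNpos : 0 < N := by positivity
  have hcard : ∑ f : S → Bool, (1 : ℝ) = N := by simp [hN]
  refine ⟨fun f => N⁻¹ • (1 + ∑ v : S, (sg (f v) * a v) • G v.1), ?_, ?_, ?_⟩
  · intro f
    refine psd_smul (psd_one_add (hG.sum_herm _ (fun v : S => v.1) _) ?_
      (hG.sum_sq _ (fun v : S => v.1) Subtype.val_injective _)) (by positivity)
    simp only [mul_pow, sg_sq, one_mul]
    rw [Finset.sum_coe_sort S (fun v => a v ^ 2)]
    exact h
  · rw [← Finset.smul_sum, Finset.sum_add_distrib, Finset.sum_comm]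
    simp only [← Finset.sum_smul, ← Finset.sum_mul, sum_sg, zero_mul, zero_smul,
      Finset.sum_const_zero, add_zero]
    have : ∑ f : S → Bool, (1 : Matrix n n ℂ) = N • (1 : Matrix n n ℂ) := by
      rw [← hcard, Finset.sum_smul]; simp
    rw [this, smul_smul, inv_mul_cancel₀ hNpos.ne', one_smul]
  · intro v b
    rw [Finset.sum_filter]
    have e1 : ∀ f : S → Bool,
        (if f v = b then N⁻¹ • (1 + ∑ v : S, (sg (f v) * a v) • G v.1) else 0)
        = (N⁻¹ / 2) • ((1 + sg b * sg (f v)) • (1 : Matrix n n ℂ)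
          + ∑ w : S, ((sg (f w) + sg b * (sg (f v) * sg (f w))) * a w) • G w.1) := by
      intro f
      have : (if f v = b then N⁻¹ • (1 + ∑ v : S, (sg (f v) * a v) • G v.1) else 0)
        = (if f v = b then (1 : ℝ) else 0) •
            (N⁻¹ • (1 + ∑ v : S, (sg (f v) * a v) • G v.1)) := by
        split_ifs <;> simp
      rw [this, ind_eq]
      have : ∑ w : S, ((sg (f w) + sg b * (sg (f v) * sg (f w))) * a w) • G w.1
        = (1 + sg b * sg (f v)) • ∑ w : S, (sg (f w) * a w) • G w.1 := by
        rw [Finset.smul_sum]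
        refine Finset.sum_congr rfl fun w _ => ?_
        rw [smul_smul]
        congr 1
        ring
      rw [this]
      module
    rw [Finset.sum_congr rfl fun f _ => e1 f, ← Finset.smul_sum, Finset.sum_add_distrib,
      Finset.sum_comm]
    simp only [← Finset.sum_smul, ← Finset.sum_mul, Finset.sum_add_distrib, ← Finset.mul_sum,
      sum_sg, sum_sg_sg, hcard]
    rw [Finset.sum_eq_single v]
    · rw [if_pos rfl, ← hN, noisy]
      rw [smul_add, smul_add, smul_smul, smul_smul, smul_smul]
      congr 2 <;> field_simp <;> ring
    · intro w _ hw
      simp [Ne.symm hw]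
    · simp

lemma not_jm_noisy [Nonempty n] (hG : Cliff G) (a : V → ℝ) (S : Finset V) (hS : S.Nonempty)
    (h : JM (noisy G a) S) : ∑ v ∈ S, a v ≤ √(S.card) := by
  obtain ⟨J, h1, h2, h3⟩ := h
  have hr : 0 < √(S.card : ℝ) := Real.sqrt_pos.2 (by exact_mod_cast hS.card_pos)
  have key : ∑ f : S → Bool, (∑ v : S, sg (f v) • G v.1) * J f
      = (∑ v ∈ S, a v) • (1 : Matrix n n ℂ) := by
    simp only [Finset.sum_mul]
    rw [Finset.sum_comm, ← Finset.sum_coe_sort S a, Finset.sum_smul]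
    refine Finset.sum_congr rfl fun v _ => ?_
    have e : ∑ f : S → Bool, sg (f v) • J f = a v.1 • G v.1 := by
      have e0 : ∀ f : S → Bool, sg (f v) • J f
          = (if f v = true then J f else 0) - (if f v = false then J f else 0) := by
        intro f
        cases hb : f v <;> simp [sg]
      rw [Finset.sum_congr rfl fun f _ => e0 f, Finset.sum_sub_distrib, ← Finset.sum_filter,
        ← Finset.sum_filter, h3, h3]
      simp only [noisy, sg, Bool.false_eq_true, if_false, if_true]
      module
    calc ∑ f : S → Bool, sg (f v) • G v.1 * J f = G v.1 * ∑ f : S → Bool, sg (f v) • J f := by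
          rw [Finset.mul_sum]
          refine Finset.sum_congr rfl fun f _ => ?_
          rw [smul_mul_assoc, mul_smul_comm]
      _ = _ := by rw [e, mul_smul_comm, hG.2.1]
  have hb : ∀ f : S → Bool, ((∑ v : S, sg (f v) • G v.1) * J f).trace.re
      ≤ √(S.card) * (J f).trace.re := by
    intro f
    refine trace_bound (hG.sum_herm _ (fun v : S => v.1) _) (h1 f) hr ?_
    rw [hG.sum_sq _ (fun v : S => v.1) Subtype.val_injective]
    congr 1
    rw [Real.sq_sqrt (by positivity)]
    simp [sg_sq]
  have hsum := Finset.sum_le_sum (s := Finset.univ) fun f _ => hb f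
  rw [← Finset.mul_sum, ← Complex.re_sum, ← Complex.re_sum, ← Matrix.trace_sum,
    ← Matrix.trace_sum, key, h2, Matrix.trace_smul, Matrix.trace_one] at hsum
  simp only [Complex.smul_re, Complex.natCast_re, smul_eq_mul] at hsum
  have hn : (0 : ℝ) < Fintype.card n := by exact_mod_cast Fintype.card_pos
  exact le_of_mul_le_mul_right hsum hn

end

end JMHyper

open JMHyper in
/-- **All joint measurability structures are quantum realizable.** For every joint measurability
hypergraph `(V, E)` (downward closed, containing all singletons) there are a dimension `d ≥ 1`
and binary POVMs `F v` on `ℂ^d` such that a nonempty set `S` of measurements is jointly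
measurable precisely when `S ∈ E`. -/
theorem all_joint_measurability_hypergraphs_quantum_realizable
    (V : Type*) [Fintype V] [DecidableEq V] [Nonempty V]
    (E : Finset (Finset V))
    (hdown : ∀ e ∈ E, ∀ e' ⊆ e, e' ∈ E)
    (hsingle : ∀ v : V, ({v} : Finset V) ∈ E) :
    ∃ d : ℕ, 1 ≤ d ∧
      ∃ F : V → Bool → Matrix (Fin d) (Fin d) ℂ,
        (∀ v b, (F v b).PosSemidef) ∧ (∀ v, F v false + F v true = 1) ∧
        ∀ S : Finset V, S.Nonempty →
          ((∃ J : (S → Bool) → Matrix (Fin d) (Fin d) ℂ,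
              (∀ f, (J f).PosSemidef) ∧ (∑ f, J f = 1) ∧
                ∀ (v : S) (b : Bool),
                  ∑ f ∈ Finset.univ.filter (fun f => f v = b), J f = F v.1 b) ↔
            S ∈ E) := by
  obtain ⟨n, _, _, _, G, hG⟩ := exists_cliff V
  let a : Finset V → V → ℝ := fun T v =>
    if T ∈ E then 0 else if v ∈ T then 1 / √((T.card : ℝ) - 1) else 0
  let B : V → Bool → Matrix (n × Finset V) (n × Finset V) ℂ :=
    fun v b => Matrix.blockDiagonal (fun T => noisy G (a T) v b)
  have hcard : ∀ T, T ∉ E → T.Nonempty → 2 ≤ T.card := by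
    intro T hT hne
    by_contra hlt
    have : T.card = 1 := by have := hne.card_pos; omega
    obtain ⟨v, rfl⟩ := Finset.card_eq_one.1 this
    exact hT (hsingle v)
  have hempty : (∅ : Finset V) ∈ E :=
    hdown _ (hsingle (Classical.arbitrary V)) _ (Finset.empty_subset _)
  have hB1 : ∀ S ∈ E, JM B S := by
    intro S hS
    refine JM.block fun T => jm_noisy hG _ _ ?_
    by_cases hT : T ∈ E
    · simp [a, hT]
    · have hne : T.Nonempty := by
        rw [Finset.nonempty_iff_ne_empty]
        rintro rfl
        exact hT hempty
      have h2 := hcard T hT hne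
      have h2' : (0 : ℝ) < (T.card : ℝ) - 1 := by
        have : (2 : ℝ) ≤ T.card := by exact_mod_cast h2
        linarith
      have hlt : (S ∩ T).card < T.card := by
        refine Finset.card_lt_card (Finset.ssubset_iff_subset_ne.2 ⟨Finset.inter_subset_right, ?_⟩)
        intro h
        exact hT (hdown S hS T (Finset.inter_eq_right.1 h))
      have hle : ((S ∩ T).card : ℝ) ≤ (T.card : ℝ) - 1 := by
        have : ((S ∩ T).card : ℝ) + 1 ≤ T.card := by exact_mod_cast hlt
        linarith
      have : ∀ v, a T v ^ 2 = if v ∈ T then 1 / ((T.card : ℝ) - 1) else 0 := by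
        intro v
        simp only [a, hT, if_false]
        split_ifs
        · rw [div_pow, Real.sq_sqrt h2'.le, one_pow]
        · simp
      simp only [this]
      rw [← Finset.sum_filter, Finset.filter_mem_eq_inter, Finset.sum_const, nsmul_eq_mul,
        mul_one_div, div_le_one h2']
      exact hle
  have hB2 : ∀ S : Finset V, S.Nonempty → JM B S → S ∈ E := by
    intro S hne hJ
    by_contra hS
    have h2 := hcard S hS hne
    have h2' : (0 : ℝ) < (S.card : ℝ) - 1 := by
      have : (2 : ℝ) ≤ S.card := by exact_mod_cast h2
      linarith
    have hJ' := hJ.submatrix (fun i : n => (i, S)) (fun i j h => by simpa using h)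
    have hEq : (fun v b => (B v b).submatrix (fun i : n => (i, S)) (fun i : n => (i, S)))
        = noisy G (a S) := by
      funext v b
      ext i j
      simp [B, Matrix.blockDiagonal_apply]
    rw [hEq] at hJ'
    have h := not_jm_noisy hG _ S hne hJ'
    have hsum : ∑ v ∈ S, a S v = S.card * (1 / √((S.card : ℝ) - 1)) := by
      rw [← nsmul_eq_mul, ← Finset.sum_const]
      refine Finset.sum_congr rfl fun v hv => ?_
      simp [a, hS, hv]
    have hp : 0 < √((S.card : ℝ) - 1) := Real.sqrt_pos.2 h2'
    rw [hsum, mul_one_div, div_le_iff₀ hp, ← Real.sqrt_mul (by positivity)] at h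
    have h5 := Real.le_sqrt' (by linarith : (0 : ℝ) < S.card) |>.1 h
    nlinarith
  let e := Fintype.equivFin (n × Finset V)
  refine ⟨Fintype.card (n × Finset V), Fintype.card_pos,
    fun v b => (B v b).submatrix e.symm e.symm, ?_, ?_, ?_⟩
  · intro v b
    refine Matrix.PosSemidef.submatrix ?_ _
    obtain ⟨J, h1, -, h3⟩ := hB1 {v} (hsingle v)
    rw [← h3 ⟨v, by simp⟩ b]
    exact Matrix.posSemidef_sum _ fun f _ => h1 f
  · intro v
    have : B v false + B v true = 1 := by
      simp only [B]
      rw [← Matrix.blockDiagonal_add]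
      have : ((fun T => noisy G (a T) v false) + fun T => noisy G (a T) v true)
          = (1 : Finset V → Matrix n n ℂ) := by
        funext T
        exact noisy_add _ _
      rw [this, Matrix.blockDiagonal_one]
    rw [← Matrix.submatrix_one_equiv e.symm, ← this]
    rfl
  · intro S hne
    constructor
    · intro h
      refine hB2 S hne ?_
      have h' : JM (fun v b => (B v b).submatrix e.symm e.symm) S := h
      have := h'.submatrix e e.injective
      simpa [Matrix.submatrix_submatrix] using this
    · intro hS
      exact (hB1 S hS).submatrix e.symm e.symm.injective
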